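/- Two-sided local generation of a state via post-selection (Claim 2 of the paper): Let 𝒳, 𝒴 be finite sets and S_A, S_B finite types. Let φ = ∑_{x∈𝒳, y∈𝒴} e_x ⊗ e_x ⊗ e_y ⊗ e_y ⊗ v_{xy} be a unit vector on ℂ^𝒳(X) ⊗ ℂ^𝒳(X') ⊗ ℂ^𝒴(Y) ⊗ ℂ^𝒴(Y') ⊗ ℂ^{S_A × S_B}, with v_{xy} ∈ ℂ^{S_A × S_B} and ∑_{x,y} ‖v_{xy}‖² = 1. For x ∈ 𝒳 let G^x be the reduced density matrix of φ on registers (Y,Y',B) at the X-block x (the positive semidefinite matrix on ℂ^𝒴 ⊗ ℂ^𝒴 ⊗ ℂ^{S_B} supported on pairs (y,y) with (y,b),(y,b') entry ∑_{a} v_{xy}(a,b)·conj(v_{xy}(a,b'))), and for y ∈ 𝒴 let H^y be the reduced density matrix of φ on registers (X,X',A) at the Y-block y (entries ((x,x,a),(x̃,x̃,a')) equal to ∑_b v_{xy}(a,b)·conj(v_{x̃y}(a',b))). Assume: (i) there exists a state σ on ℂ^𝒴 ⊗ ℂ^𝒴 ⊗ ℂ^{S_B} with G^x ≤ 2^{−k₁}·σ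 for all x (H_min(X|BYY') ≥ k₁); and (ii) H^y ≤ 2^{−k₂}·(∑_{y'} H^{y'}) for all y (modified min-entropy H̃_min(Y|XX'A) ≥ k₂). Then there exist finite types A₀, B₀, a unit vector s ∈ ℂ^{A₀ × B₀}, a complex number c with |c|² ≥ 2^{k₁+k₂}/(|𝒳|·|𝒴|), and linear maps K_A : ℂ^𝒳 ⊗ ℂ^{A₀} → ℂ^𝒳 ⊗ ℂ^{S_A} and K_B : ℂ^𝒴 ⊗ ℂ^{B₀} → ℂ^𝒴 ⊗ ℂ^{S_B} with K_A†K_A ≤ I and K_B†K_B ≤ I, such that applying I_{X₁} ⊗ K_A ⊗ I_{Y₁} ⊗ K_B to the vector (1/√(|𝒳||𝒴|)) ∑_{x,y} e_x(X₁) ⊗ e_x(X₂) ⊗ e_y(Y₁) ⊗ e_y(Y₂) ⊗ s (with K_A acting on (X₂,A₀) and K_B on (Y₂,B₀)) yields c · φ̃, where φ̃ is φ with registers X, Y relabeled X₁, Y₁. -/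

import Mathlib

open scoped BigOperators ComplexOrder
open Matrix Finset

/-- Löwner order: `A ≤ B` iff `B - A` is positive semidefinite. -/
def Loewner {n : Type*} [Fintype n] (A B : Matrix n n ℂ) : Prop := (B - A).PosSemidef

/-- The conclusion of Claim 2, for given ancilla types `A₀, B₀`: there exist a pure state `s`
split between Alice and Bob, local measurement contractions `K_A, K_B`, and an amplitude `c` with
`|c|² ≥ 2^{k₁+k₂}/(|𝒳||𝒴|)`, such that applying `I ⊗ K_A ⊗ I ⊗ K_B` to the maximally entangled
states on `X₁X₂`, `Y₁Y₂` tensored with `s` yields `c` times the target state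
`φ̃ = ∑_{x,y} e_x ⊗ e_x ⊗ e_y ⊗ e_y ⊗ v_{xy}`. -/
def Claim2Conclusion (𝒳 𝒴 S_A S_B : Type*) [Fintype 𝒳] [DecidableEq 𝒳]
    [Fintype 𝒴] [DecidableEq 𝒴]
    [Fintype S_A] [DecidableEq S_A] [Fintype S_B] [DecidableEq S_B]
    (v : 𝒳 → 𝒴 → S_A × S_B → ℂ) (k₁ k₂ : ℝ)
    (A₀ B₀ : Type) [iFA : Fintype A₀] [iDA : DecidableEq A₀]
    [iFB : Fintype B₀] [iDB : DecidableEq B₀] : Prop :=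
  ∃ (s : A₀ × B₀ → ℂ) (c : ℂ) (K_A : Matrix (𝒳 × S_A) (𝒳 × A₀) ℂ)
      (K_B : Matrix (𝒴 × S_B) (𝒴 × B₀) ℂ),
    (∑ q, ‖s q‖ ^ 2 = 1) ∧
    (2 ^ (k₁ + k₂) / ((Fintype.card 𝒳 : ℝ) * (Fintype.card 𝒴 : ℝ)) ≤ ‖c‖ ^ 2) ∧
    Loewner (K_Aᴴ * K_A) 1 ∧
    Loewner (K_Bᴴ * K_B) 1 ∧
    ∀ (x₁ x' : 𝒳) (y₁ y' : 𝒴) (a : S_A) (b : S_B),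
      (Real.sqrt ((Fintype.card 𝒳 : ℝ) * (Fintype.card 𝒴 : ℝ)) : ℂ)⁻¹ *
          ∑ a₀, ∑ b₀, K_A (x', a) (x₁, a₀) * K_B (y', b) (y₁, b₀) * s (a₀, b₀) =
        c * (if x₁ = x' ∧ y₁ = y' then v x₁ y₁ (a, b) else 0)

/-!
View `v` as an operator `V` from `(Y,B)` to `(X,A)`, with row blocks `V_x` and column blocks `V^y`;
the compressed `G^x`, `H^y` and `∑ y, H^y` are then, up to transposition, the Gram matrices of
`V_x`, `V^y` and `V`. Let `S` be a purification of `σ` restricted to the diagonal pairs `(y,y)`.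
By Douglas' lemma an inequality `M Mᴴ ≤ t N Nᴴ` yields `M = √t N C` with a contraction `C`, so
hypothesis (i) gives `V_x = √t₁ A_x S` and hypothesis (ii) gives `V^y = √t₂ V B_yᵀ`, where
`t_i = 2^{-k_i}`. Comparing the blocks in position `(x,y)`, `v_{xy} = √(t₁t₂) A_x S B_yᵀ`: local
contractions controlled by `x` and `y` turn the one vector `S` into every `v_{xy}`. Normalising `S`,
whose squared norm is at most `tr σ = 1`, can only increase the success probability.
-/

section MatrixFactorization

open scoped MatrixOrder

variable {𝕜 k m n p : Type*} [RCLike 𝕜]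

open scoped Matrix.Norms.L2Operator in
lemma exists_eq_conjTranspose_mul_self_of_posSemidef [Fintype n] {M : Matrix n n 𝕜}
    (hM : M.PosSemidef) : ∃ T : Matrix n n 𝕜, M = Tᴴ * T := by
  classical
  exact CStarAlgebra.nonneg_iff_eq_star_mul_self.1 hM.nonneg

lemma trace_submatrix_le_trace_of_posSemidef [Fintype m] [Fintype n] {M : Matrix n n 𝕜}
    (hM : M.PosSemidef) {f : m → n} (hf : Function.Injective f) :
    (M.submatrix f f).trace ≤ M.trace := by
  have hle := sum_le_univ_sum_of_nonneg (f := M.diag) (s := univ.map ⟨f, hf⟩)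
    fun _ => hM.diag_nonneg
  rwa [sum_map] at hle

lemma trace_mul_conjTranspose_self_eq_sum_norm_sq [Fintype m] [Fintype n] (M : Matrix m n 𝕜) :
    (M * Mᴴ).trace = ((∑ i, ∑ j, ‖M i j‖ ^ 2 : ℝ) : 𝕜) := by
  simp only [Matrix.trace, diag_apply, mul_apply, conjTranspose_apply, RCLike.star_def,
    RCLike.mul_conj, map_sum, map_pow]

/-- Indices are transposed so that `S` is the coefficient matrix of a bipartite vector whose
right marginal is the principal submatrix of `σ`. -/
lemma exists_purification_submatrix [Fintype m] [Fintype n] {σ : Matrix m m 𝕜}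
    (hσ : σ.PosSemidef) {f : n → m} (hf : Function.Injective f) :
    ∃ S : Matrix n n 𝕜, Sᵀ * Sᵀᴴ = σ.submatrix f f ∧
      ((∑ q : n × n, ‖S q.1 q.2‖ ^ 2 : ℝ) : 𝕜) ≤ σ.trace := by
  obtain ⟨T, hT⟩ := exists_eq_conjTranspose_mul_self_of_posSemidef (hσ.submatrix f)
  have hS : Tᴴᵀᵀ * Tᴴᵀᵀᴴ = σ.submatrix f f := by
    rw [transpose_transpose, conjTranspose_conjTranspose, hT]
  refine ⟨Tᴴᵀ, hS, ?_⟩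
  calc ((∑ q : n × n, ‖Tᴴᵀ q.1 q.2‖ ^ 2 : ℝ) : 𝕜)
      = (Tᴴᵀᵀ * Tᴴᵀᵀᴴ).trace := by
        rw [trace_mul_conjTranspose_self_eq_sum_norm_sq, Fintype.sum_prod_type_right]; rfl
    _ ≤ σ.trace := hS ▸ trace_submatrix_le_trace_of_posSemidef hσ hf

lemma conjTranspose_mul_mul_le_of_le [Fintype m] [Finite n] {M N : Matrix m m 𝕜} (h : M ≤ N)
    (X : Matrix m n 𝕜) : Xᴴ * M * X ≤ Xᴴ * N * X := by
  rw [Matrix.le_iff, ← Matrix.sub_mul, ← Matrix.mul_sub]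
  exact (Matrix.le_iff.1 h).conjTranspose_mul_mul_same X

lemma mul_eq_zero_of_mul_conjTranspose_le [Finite k] [Fintype m] [Fintype n] [Fintype p]
    {A : Matrix m n 𝕜} {B : Matrix m p 𝕜}
    (h : A * Aᴴ ≤ B * Bᴴ) {W : Matrix k m 𝕜} (hW : W * B = 0) : W * A = 0 := by
  have hle : (W * A) * (W * A)ᴴ ≤ (W * B) * (W * B)ᴴ := by
    simpa only [conjTranspose_conjTranspose, conjTranspose_mul, Matrix.mul_assoc]
      using conjTranspose_mul_mul_le_of_le h Wᴴ
  rw [hW, Matrix.zero_mul] at hle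
  exact self_mul_conjTranspose_eq_zero.1
    (le_antisymm hle (posSemidef_self_mul_conjTranspose (W * A)).nonneg)

lemma exists_mul_conjTranspose_mul_eq_self [Fintype m] [Fintype n] (K : Matrix m n 𝕜) :
    ∃ Z : Matrix m n 𝕜, K * Kᴴ * Z = K := by
  classical
  have hrange : LinearMap.range (K * Kᴴ).mulVecLin = LinearMap.range K.mulVecLin := by
    refine Submodule.eq_of_le_of_finrank_eq ?_ (rank_self_mul_conjTranspose K)
    rw [mulVecLin_mul]
    exact LinearMap.range_comp_le_range _ _
  have hcol (j : n) : ∃ z : m → 𝕜, (K * Kᴴ) *ᵥ z = K *ᵥ Pi.single j 1 :=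
    hrange.ge ⟨Pi.single j 1, rfl⟩
  choose z hz using hcol
  refine ⟨(of z)ᵀ, Matrix.ext fun i j => ?_⟩
  exact (congrFun (hz j) i).trans (by rw [mulVec_single_one, col_apply])

lemma isStarProjection_conjTranspose_mul [Fintype m] [Fintype n] {K Z : Matrix m n 𝕜}
    (h : K * Kᴴ * Z = K) : IsStarProjection (Kᴴ * Z) := by
  have hstar : (Kᴴ * Z)ᴴ * (Kᴴ * Z) = (Kᴴ * Z)ᴴ := by
    rw [conjTranspose_mul, conjTranspose_conjTranspose, Matrix.mul_assoc, ← Matrix.mul_assoc K, h]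
  have hself : (Kᴴ * Z)ᴴ = Kᴴ * Z := by
    simpa only [hstar, IsHermitian, conjTranspose_conjTranspose, eq_comm] using
      isHermitian_conjTranspose_mul_self (Kᴴ * Z)
  exact ⟨by rwa [hself] at hstar, hself⟩

/-- Douglas' factorization lemma. -/
theorem exists_contraction_eq_mul_of_mul_conjTranspose_le [Finite m] [Fintype n]
    [Fintype p] [DecidableEq p] {A : Matrix m n 𝕜} {B : Matrix m p 𝕜} (h : A * Aᴴ ≤ B * Bᴴ) :
    ∃ C : Matrix p n 𝕜, C * Cᴴ ≤ 1 ∧ A = B * C := by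
  classical
  have := Fintype.ofFinite m
  obtain ⟨Z, hZ⟩ := exists_mul_conjTranspose_mul_eq_self B
  have hP := isStarProjection_conjTranspose_mul hZ
  have hP_eq : Zᴴ * B = Bᴴ * Z := by
    simpa only [star_eq_conjTranspose, conjTranspose_mul, conjTranspose_conjTranspose]
      using hP.isSelfAdjoint.star_eq
  refine ⟨Zᴴ * A, ?_, ?_⟩
  · calc Zᴴ * A * (Zᴴ * A)ᴴ
        = Zᴴ * (A * Aᴴ) * Z := by
          simp only [conjTranspose_mul, conjTranspose_conjTranspose, Matrix.mul_assoc]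
      _ ≤ Zᴴ * (B * Bᴴ) * Z := conjTranspose_mul_mul_le_of_le h Z
      _ = Bᴴ * Z * (Bᴴ * Z) := by rw [← Matrix.mul_assoc, hP_eq, Matrix.mul_assoc]
      _ = Bᴴ * Z := hP.isIdempotentElem
      _ ≤ 1 := hP.le_one
  · have hW : (1 - B * Zᴴ) * B = 0 := by
      rw [Matrix.sub_mul, Matrix.one_mul, Matrix.mul_assoc, hP_eq, ← Matrix.mul_assoc, hZ, sub_self]
    have hWA := mul_eq_zero_of_mul_conjTranspose_le h hW
    rwa [Matrix.sub_mul, Matrix.one_mul, sub_eq_zero, Matrix.mul_assoc] at hWA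

lemma exists_contraction_eq_sqrt_smul_mul_transpose [Finite m] [Fintype n] [Fintype p]
    [DecidableEq p] {A : Matrix m n 𝕜} {B : Matrix m p 𝕜} {t : ℝ} (ht : 0 ≤ t)
    (h : A * Aᴴ ≤ t • (B * Bᴴ)) :
    ∃ C : Matrix n p 𝕜, Cᴴ * C ≤ 1 ∧ A = √t • (B * Cᵀ) := by
  have hscale : (√t • B) * (√t • B)ᴴ = t • (B * Bᴴ) := by
    rw [conjTranspose_smul, star_trivial, Matrix.smul_mul, Matrix.mul_smul, smul_smul,
      Real.mul_self_sqrt ht]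
  obtain ⟨C, hC, hAC⟩ := exists_contraction_eq_mul_of_mul_conjTranspose_le (h.trans_eq hscale.symm)
  refine ⟨Cᵀ, ?_, by rw [hAC, Matrix.smul_mul, transpose_transpose]⟩
  have hT : Cᵀᴴ * Cᵀ = (C * Cᴴ)ᵀ := by rw [transpose_mul]; rfl
  rw [Matrix.le_iff, hT, ← transpose_one, ← transpose_sub]
  exact (Matrix.le_iff.1 hC).transpose

theorem exists_contractions_submatrix_eq {X Y a b : Type*} [Fintype a] [Fintype b]
    [Fintype k] [DecidableEq k] [Finite m] [Fintype n] [DecidableEq n]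
    {V : Matrix m n 𝕜} {S : Matrix k n 𝕜}
    {t₁ t₂ : ℝ} (ht₁ : 0 ≤ t₁) (ht₂ : 0 ≤ t₂) {r : X → a → m} {c : Y → b → n}
    (hrow : ∀ x, (V.submatrix (r x) id)ᵀ * (V.submatrix (r x) id)ᵀᴴ ≤ t₁ • (Sᵀ * Sᵀᴴ))
    (hcol : ∀ y, V.submatrix id (c y) * (V.submatrix id (c y))ᴴ ≤ t₂ • (V * Vᴴ)) :
    ∃ (A : X → Matrix a k 𝕜) (B : Y → Matrix b n 𝕜),
      (∀ x, (A x)ᴴ * A x ≤ 1) ∧ (∀ y, (B y)ᴴ * B y ≤ 1) ∧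
      ∀ x y, V.submatrix (r x) (c y) = (√t₁ * √t₂) • (A x * S * (B y)ᵀ) := by
  choose A hA hVA using fun x => exists_contraction_eq_sqrt_smul_mul_transpose ht₁ (hrow x)
  choose B hB hVB using fun y => exists_contraction_eq_sqrt_smul_mul_transpose ht₂ (hcol y)
  refine ⟨A, B, hA, hB, fun x y => ?_⟩
  have hVA' : V.submatrix (r x) id = √t₁ • (A x * S) := by
    rw [← transpose_transpose (V.submatrix (r x) id), hVA x, transpose_smul, transpose_mul,
      transpose_transpose, transpose_transpose]
  calc V.submatrix (r x) (c y)
      = (V.submatrix id (c y)).submatrix (r x) id := rfl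
    _ = √t₂ • (V.submatrix (r x) id * (B y)ᵀ) := by rw [hVB y]; rfl
    _ = (√t₁ * √t₂) • (A x * S * (B y)ᵀ) := by
      rw [hVA', Matrix.smul_mul, smul_smul, mul_comm]

lemma posSemidef_blockDiagonal [Finite m] [DecidableEq m] [Finite n] {M : m → Matrix n n 𝕜}
    (hM : ∀ i, (M i).PosSemidef) : (blockDiagonal M).PosSemidef := by
  have := Fintype.ofFinite m
  have := Fintype.ofFinite n
  choose T hT using fun i => exists_eq_conjTranspose_mul_self_of_posSemidef (hM i)
  rw [funext hT, blockDiagonal_mul, ← blockDiagonal_conjTranspose]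
  exact posSemidef_conjTranspose_mul_self _

/-- The controlled operation `∑ x, |x⟩⟨x| ⊗ D x`, with the control register as first factor
(`blockDiagonal` has it as second factor). -/
def controlled {𝕜 k m n : Type*} [Zero 𝕜] [DecidableEq k] (D : k → Matrix m n 𝕜) :
    Matrix (k × m) (k × n) 𝕜 :=
  (blockDiagonal D).submatrix (Equiv.prodComm k m) (Equiv.prodComm k n)

lemma controlled_apply {𝕜 k m n : Type*} [Zero 𝕜] [DecidableEq k] (D : k → Matrix m n 𝕜)
    (x x' : k) (i : m) (j : n) :
    controlled D (x, i) (x', j) = if x = x' then D x i j else 0 :=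
  blockDiagonal_apply' D i x j x'

lemma conjTranspose_mul_controlled_le_one [Fintype k] [DecidableEq k] [Fintype m] [Finite n]
    [DecidableEq n] {D : k → Matrix m n 𝕜} (hD : ∀ x, (D x)ᴴ * D x ≤ 1) :
    (controlled D)ᴴ * controlled D ≤ 1 := by
  have hblock := posSemidef_blockDiagonal fun x => Matrix.le_iff.1 (hD x)
  have hsub : 1 - (controlled D)ᴴ * controlled D =
      (blockDiagonal fun x => 1 - (D x)ᴴ * D x).submatrix (Equiv.prodComm k n)
        (Equiv.prodComm k n) := by
    rw [controlled, conjTranspose_submatrix, submatrix_mul_equiv, blockDiagonal_conjTranspose,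
      ← blockDiagonal_mul, ← submatrix_one_equiv (Equiv.prodComm k n), ← blockDiagonal_one]
    exact congrArg (fun M : Matrix (n × k) (n × k) 𝕜 => M.submatrix Prod.swap Prod.swap)
      (blockDiagonal_sub (1 : k → Matrix n n 𝕜) fun x => (D x)ᴴ * D x).symm
  rw [Matrix.le_iff, hsub]
  exact hblock.submatrix _

end MatrixFactorization

section Claim2

variable {𝒳 𝒴 S_A S_B : Type*}

/-- The amplitude tensor `v` of `φ` as an operator from the registers `(Y,B)` to `(X,A)`. -/
def amplitudeMatrix (v : 𝒳 → 𝒴 → S_A × S_B → ℂ) : Matrix (𝒳 × S_A) (𝒴 × S_B) ℂ :=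
  of fun p q => v p.1 q.1 (p.2, q.2)

/-- The index map of the isometry `e_y ⊗ e_b ↦ e_y ⊗ e_y ⊗ e_b`, which copies a classical
register. -/
def copyFst {α β : Type*} (q : α × β) : α × α × β := (q.1, q.1, q.2)

lemma copyFst_injective {α β : Type*} : Function.Injective (copyFst (α := α) (β := β)) := by
  rintro ⟨x, a⟩ ⟨y, b⟩ h
  simp_all [copyFst]

/-- The reduced block `G^x` of `φ` on the registers `(Y,Y',B)`. -/
def reducedBlockX [DecidableEq 𝒴] [Fintype S_A] (v : 𝒳 → 𝒴 → S_A × S_B → ℂ) (x : 𝒳) :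
    Matrix (𝒴 × 𝒴 × S_B) (𝒴 × 𝒴 × S_B) ℂ := fun q r =>
  if q.1 = q.2.1 ∧ r.1 = r.2.1 then
    ∑ a, v x q.1 (a, q.2.2) * (starRingEnd ℂ) (v x r.1 (a, r.2.2))
  else 0

/-- The reduced block `H^y` of `φ` on the registers `(X,X',A)`. -/
def reducedBlockY [DecidableEq 𝒳] [Fintype S_B] (v : 𝒳 → 𝒴 → S_A × S_B → ℂ) (y : 𝒴) :
    Matrix (𝒳 × 𝒳 × S_A) (𝒳 × 𝒳 × S_A) ℂ := fun q r =>
  if q.1 = q.2.1 ∧ r.1 = r.2.1 then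
    ∑ b, v q.1 y (q.2.2, b) * (starRingEnd ℂ) (v r.1 y (r.2.2, b))
  else 0

lemma reducedBlockX_submatrix_copyFst [DecidableEq 𝒴] [Fintype S_A] {n : Type*}
    (v : 𝒳 → 𝒴 → S_A × S_B → ℂ) (x : 𝒳) (f : n → 𝒴 × S_B) :
    (reducedBlockX v x).submatrix (copyFst ∘ f) (copyFst ∘ f) =
      ((amplitudeMatrix v).submatrix (Prod.mk x) f)ᵀ *
        ((amplitudeMatrix v).submatrix (Prod.mk x) f)ᵀᴴ := by
  ext q r
  simp [reducedBlockX, copyFst, amplitudeMatrix, mul_apply]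

lemma reducedBlockY_submatrix_copyFst [DecidableEq 𝒳] [Fintype S_B]
    (v : 𝒳 → 𝒴 → S_A × S_B → ℂ) (y : 𝒴) :
    (reducedBlockY v y).submatrix copyFst copyFst =
      (amplitudeMatrix v).submatrix id (Prod.mk y) *
        ((amplitudeMatrix v).submatrix id (Prod.mk y))ᴴ := by
  ext q r
  simp [reducedBlockY, copyFst, amplitudeMatrix, mul_apply]

lemma sum_reducedBlockY_submatrix_copyFst [DecidableEq 𝒳] [Fintype 𝒴] [Fintype S_B]
    (v : 𝒳 → 𝒴 → S_A × S_B → ℂ) :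
    (∑ y, reducedBlockY v y).submatrix copyFst copyFst =
      amplitudeMatrix v * (amplitudeMatrix v)ᴴ := by
  ext q r
  simp [reducedBlockY, copyFst, amplitudeMatrix, mul_apply, Matrix.sum_apply,
    Fintype.sum_prod_type]

open scoped MatrixOrder in
lemma submatrix_le_smul_submatrix_of_loewner {m n : Type*} [Fintype n]
    {M N : Matrix n n ℂ} {t : ℝ} (h : Loewner M (t • N)) (f : m → n) :
    M.submatrix f f ≤ t • N.submatrix f f :=
  PosSemidef.submatrix h f

open scoped MatrixOrder in
lemma exists_contractions_amplitudeMatrix_eq [Fintype 𝒳] [DecidableEq 𝒳] [Fintype 𝒴]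
    [DecidableEq 𝒴] [Fintype S_A] [Fintype S_B]
    {n k : Type*} [Fintype n] [DecidableEq n] [Fintype k] [DecidableEq k]
    {v : 𝒳 → 𝒴 → S_A × S_B → ℂ} {t₁ t₂ : ℝ} (ht₁ : 0 ≤ t₁) (ht₂ : 0 ≤ t₂)
    {σ : Matrix (𝒴 × 𝒴 × S_B) (𝒴 × 𝒴 × S_B) ℂ} {e : n ≃ 𝒴 × S_B} {S : Matrix k n ℂ}
    (hS : Sᵀ * Sᵀᴴ = σ.submatrix (copyFst ∘ e) (copyFst ∘ e))
    (hX : ∀ x, Loewner (reducedBlockX v x) (t₁ • σ))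
    (hY : ∀ y, Loewner (reducedBlockY v y) (t₂ • ∑ y', reducedBlockY v y')) :
    ∃ (A : 𝒳 → Matrix S_A k ℂ) (B : 𝒴 → Matrix S_B n ℂ),
      (∀ x, (A x)ᴴ * A x ≤ 1) ∧ (∀ y, (B y)ᴴ * B y ≤ 1) ∧
      ∀ x y, (amplitudeMatrix v).submatrix (Prod.mk x) (Prod.mk y) =
        (√t₁ * √t₂) • (A x * S * (B y)ᵀ) := by
  have hcomp (y : 𝒴) : e ∘ (fun b => e.symm (y, b)) = Prod.mk y :=
    funext fun b => e.apply_symm_apply (y, b)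
  have hV := exists_contractions_submatrix_eq (V := (amplitudeMatrix v).submatrix id e) (S := S)
    ht₁ ht₂ (r := Prod.mk) (c := fun y b => e.symm (y, b)) ?_ ?_
  · simpa only [submatrix_submatrix, Function.id_comp, hcomp] using hV
  · intro x
    have hle := submatrix_le_smul_submatrix_of_loewner (hX x) (copyFst ∘ e)
    rwa [reducedBlockX_submatrix_copyFst, ← hS] at hle
  · intro y
    have hle := submatrix_le_smul_submatrix_of_loewner (hY y) copyFst
    rwa [reducedBlockY_submatrix_copyFst, sum_reducedBlockY_submatrix_copyFst,
      ← submatrix_id_id (amplitudeMatrix v * _),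
      ← submatrix_mul_equiv _ _ id e id, ← conjTranspose_submatrix, ← hcomp] at hle

lemma sum_sum_mul_mul_eq_mul_mul_transpose {k l m n R : Type*} [Fintype m] [Fintype n]
    [CommSemiring R] (A : Matrix k m R) (B : Matrix l n R) (S : Matrix m n R) (a : k) (b : l) :
    ∑ i, ∑ j, A a i * B b j * S i j = (A * S * Bᵀ) a b := by
  simp only [mul_apply, transpose_apply, sum_mul]
  rw [sum_comm]
  exact sum_congr rfl fun _ _ => sum_congr rfl fun _ _ => by ring

lemma two_rpow_add_div_le_inv_sq {N r : ℝ} (hN : 0 ≤ N) (hr : 0 < r) (hr_le : r ≤ 1)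
    (k₁ k₂ : ℝ) :
    2 ^ (k₁ + k₂) / N ≤ ((√N * √r * (√(2 ^ (-k₁)) * √(2 ^ (-k₂))))⁻¹) ^ 2 := by
  have hsq : ((√N * √r * (√(2 ^ (-k₁)) * √(2 ^ (-k₂))))⁻¹) ^ 2 = 2 ^ (k₁ + k₂) / N * r⁻¹ := by
    rw [inv_pow, mul_pow, mul_pow, mul_pow, Real.sq_sqrt hN, Real.sq_sqrt hr.le,
      Real.sq_sqrt (by positivity), Real.sq_sqrt (by positivity), ← Real.rpow_add two_pos,
      ← neg_add, Real.rpow_neg two_pos.le, mul_inv, mul_inv, inv_inv]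
    ring
  rw [hsq]
  exact le_mul_of_one_le_right (by positivity) ((one_le_inv₀ hr).2 hr_le)

open scoped MatrixOrder in
lemma claim2Conclusion_of_factorization [Fintype 𝒳] [DecidableEq 𝒳] [Fintype 𝒴] [DecidableEq 𝒴]
    [Fintype S_A] [DecidableEq S_A] [Fintype S_B] [DecidableEq S_B]
    {v : 𝒳 → 𝒴 → S_A × S_B → ℂ} {k₁ k₂ : ℝ}
    {A₀ B₀ : Type} [Fintype A₀] [DecidableEq A₀] [Fintype B₀] [DecidableEq B₀]
    {S : Matrix A₀ B₀ ℂ} (hS₀ : S ≠ 0) (hS : ∑ q : A₀ × B₀, ‖S q.1 q.2‖ ^ 2 ≤ 1)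
    {A : 𝒳 → Matrix S_A A₀ ℂ} (hA : ∀ x, (A x)ᴴ * A x ≤ 1)
    {B : 𝒴 → Matrix S_B B₀ ℂ} (hB : ∀ y, (B y)ᴴ * B y ≤ 1)
    (hv : ∀ x y, (amplitudeMatrix v).submatrix (Prod.mk x) (Prod.mk y) =
      (√(2 ^ (-k₁)) * √(2 ^ (-k₂))) • (A x * S * (B y)ᵀ)) :
    Claim2Conclusion 𝒳 𝒴 S_A S_B v k₁ k₂ A₀ B₀ := by
  obtain ⟨r, hr⟩ : ∃ r : ℝ, ∑ q : A₀ × B₀, ‖S q.1 q.2‖ ^ 2 = r := ⟨_, rfl⟩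
  have hr_pos : 0 < r := by
    obtain ⟨i, j, hij⟩ : ∃ i j, S i j ≠ 0 := by
      contrapose! hS₀
      exact Matrix.ext hS₀
    rw [← hr]
    exact sum_pos' (fun _ _ => by positivity) ⟨(i, j), mem_univ _, by positivity⟩
  refine ⟨fun q => (√r : ℂ)⁻¹ * S q.1 q.2,
    ((√(Fintype.card 𝒳 * Fintype.card 𝒴) * √r * (√(2 ^ (-k₁)) * √(2 ^ (-k₂))) : ℝ) : ℂ)⁻¹,
    controlled A, controlled B, ?_, ?_, conjTranspose_mul_controlled_le_one hA,
    conjTranspose_mul_controlled_le_one hB, ?_⟩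
  · simp only [norm_mul, norm_inv, Complex.norm_real, Real.norm_eq_abs, mul_pow, inv_pow, sq_abs,
      Real.sq_sqrt hr_pos.le, ← mul_sum, hr, inv_mul_cancel₀ hr_pos.ne']
  · rw [norm_inv, Complex.norm_real, Real.norm_eq_abs, inv_pow, sq_abs, ← inv_pow]
    exact two_rpow_add_div_le_inv_sq (by positivity) hr_pos (hr ▸ hS) k₁ k₂
  · intro x x' y y' a b
    by_cases h : x = x' ∧ y = y'
    · obtain ⟨rfl, rfl⟩ := h
      have hvxy : v x y (a, b) = (√(2 ^ (-k₁)) * √(2 ^ (-k₂)) : ℝ) *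
          ∑ i, ∑ j, A x a i * B y b j * S i j := by
        rw [sum_sum_mul_mul_eq_mul_mul_transpose]
        exact congrFun (congrFun (hv x y) a) b
      have hsqrt : ((√(2 ^ (-k₁)) * √(2 ^ (-k₂)) : ℝ) : ℂ) ≠ 0 :=
        Complex.ofReal_ne_zero.2 (by positivity)
      simp only [controlled_apply, if_true, and_self, mul_left_comm _ (√r : ℂ)⁻¹, ← mul_sum]
      rw [hvxy, Complex.ofReal_mul, mul_inv, mul_assoc _ _ (_ * _), inv_mul_cancel_left₀ hsqrt,
        Complex.ofReal_mul, mul_inv, mul_assoc, mul_left_comm]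
    · obtain hx | hy := not_and_or.1 h
      · simp only [controlled_apply, Ne.symm hx, hx, false_and, if_false, zero_mul, sum_const_zero,
          mul_zero]
      · simp only [controlled_apply, Ne.symm hy, hy, and_false, if_false, mul_zero, zero_mul,
          sum_const_zero]

end Claim2

/-- Two-sided local generation of a state via post-selection (Claim 2): if the pure state
`φ = ∑_{x,y} e_x ⊗ e_x ⊗ e_y ⊗ e_y ⊗ v_{xy}` satisfies `H_min(X|BYY')_φ ≥ k₁` and the modified
min-entropy condition `H̃_min(Y|XX'A)_φ ≥ k₂`, then Alice and Bob, sharing maximally entangled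
states with the Reference and a suitable pure state between themselves, can perform local
measurements jointly succeeding with probability at least `2^{k₁+k₂}/(|𝒳||𝒴|)` whose success
branch produces exactly `φ`. -/
theorem two_sided_local_generation_via_post_selection
    {𝒳 𝒴 S_A S_B : Type*} [Fintype 𝒳] [DecidableEq 𝒳] [Nonempty 𝒳]
    [Fintype 𝒴] [DecidableEq 𝒴] [Nonempty 𝒴]
    [Fintype S_A] [DecidableEq S_A] [Fintype S_B] [DecidableEq S_B]
    (v : 𝒳 → 𝒴 → S_A × S_B → ℂ)
    (hv : ∑ x, ∑ y, ∑ q, ‖v x y q‖ ^ 2 = 1)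
    -- the reduced blocks `G^x` of `φφᴴ` on registers `(Y,Y',B)` at the `X`-block `x`
    (G : 𝒳 → Matrix (𝒴 × 𝒴 × S_B) (𝒴 × 𝒴 × S_B) ℂ)
    (hG : G = fun x => fun q r =>
      if q.1 = q.2.1 ∧ r.1 = r.2.1 then
        ∑ a, v x q.1 (a, q.2.2) * (starRingEnd ℂ) (v x r.1 (a, r.2.2))
      else 0)
    -- the reduced blocks `H^y` of `φφᴴ` on registers `(X,X',A)` at the `Y`-block `y`
    (H : 𝒴 → Matrix (𝒳 × 𝒳 × S_A) (𝒳 × 𝒳 × S_A) ℂ)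
    (hH : H = fun y => fun q r =>
      if q.1 = q.2.1 ∧ r.1 = r.2.1 then
        ∑ b, v q.1 y (q.2.2, b) * (starRingEnd ℂ) (v r.1 y (r.2.2, b))
      else 0)
    -- `H_min(X|BYY')_φ ≥ k₁`: a state `σ` with `G^x ≤ 2^{-k₁}·σ` for all `x`
    (k₁ : ℝ) (σ : Matrix (𝒴 × 𝒴 × S_B) (𝒴 × 𝒴 × S_B) ℂ)
    (hσ : σ.PosSemidef) (hσtr : σ.trace = 1)
    (hmin₁ : ∀ x, Loewner (G x) ((2 ^ (-k₁) : ℝ) • σ))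
    -- `H̃_min(Y|XX'A)_φ ≥ k₂`: `H^y ≤ 2^{-k₂}·∑_{y'} H^{y'}` for all `y`
    (k₂ : ℝ)
    (hmin₂ : ∀ y, Loewner (H y) ((2 ^ (-k₂) : ℝ) • ∑ y', H y')) :
    ∃ (A₀ B₀ : Type) (iFA : Fintype A₀) (iDA : DecidableEq A₀)
      (iFB : Fintype B₀) (iDB : DecidableEq B₀),
      Claim2Conclusion 𝒳 𝒴 S_A S_B v k₁ k₂ A₀ B₀
        (iFA := iFA) (iDA := iDA) (iFB := iFB) (iDB := iDB) := by
  subst hG hH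
  let e := (Fintype.equivFin (𝒴 × S_B)).symm
  obtain ⟨S, hSσ, hS⟩ := exists_purification_submatrix hσ (copyFst_injective.comp e.injective)
  obtain ⟨A, B, hA, hB, hV⟩ := exists_contractions_amplitudeMatrix_eq
    (t₁ := 2 ^ (-k₁)) (t₂ := 2 ^ (-k₂)) (by positivity) (by positivity) hSσ hmin₁ hmin₂
  have hS₀ : S ≠ 0 := by
    rintro rfl
    have hv₀ (x y q) : v x y q = 0 := by
      simpa using! congrFun (congrFun (hV x y) q.1) q.2
    simp [hv₀] at hv
  have hS₁ : ∑ q : _ × _, ‖S q.1 q.2‖ ^ 2 ≤ 1 := Complex.real_le_real.1 (by simpa [hσtr] using! hS)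
  exact ⟨_, _, _, inferInstance, _, inferInstance,
    claim2Conclusion_of_factorization hS₀ hS₁ hA hB hV⟩
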